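/- arXiv:1708.03991 — 4 statements merged into one kernel-verified Lean document; each statement's English description precedes it below -/
import Mathlib

section
/- Let D and E be reflexive relations on a finite type V. Then the information graph E is partially nested if and only if E equals the transitive closure of its own precedence relation, i.e., for all i j : V, E i j ↔ Relation.TransGen (prec E) i j. (Lemma 2 of the paper: G ∈ PN(Θ) if and only if G equals the transitive closure of its precedence graph.) -/
/-- The precedence relation induced by the coupling relation `D` and the
information graph `E`: subsystem `j` is a precedent of subsystem `i` if some
subsystem `k` whose outputs `i` has access to can be affected by `j`'s input. -/
def prec {V : Type*} (D E : V → V → Prop) (j i : V) : Prop := ∃ k, E k i ∧ D j k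

/-- Partial nestedness of the information graph `E` with respect to the
coupling relation `D`: whenever `j` is a precedent of `i`, the in-neighborhood
of `j` is contained in that of `i`. -/
def PartiallyNested {V : Type*} (D E : V → V → Prop) : Prop :=
  ∀ j i, prec D E j i → ∀ k, E k j → E k i

/-!
Since `D` is reflexive, every edge of `E` is a precedence, so partial nestedness makes `E`
transitive. Since `E` is reflexive, taking `k = j` in partial nestedness shows that every
precedence is an edge of `E`. Hence the precedence relation is `E` itself, which is its own
transitive closure. Conversely, a chain of precedences can always be extended by one more.
-/

section

variable {V : Type*} {D E : V → V → Prop}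

theorem le_prec [Std.Refl D] : E ≤ prec D E :=
  fun i _ hij => ⟨i, hij, refl i⟩

theorem PartiallyNested.isTrans [Std.Refl D] (h : PartiallyNested D E) : IsTrans V E :=
  ⟨fun k j i hkj hji => h j i (le_prec j i hji) k hkj⟩

theorem PartiallyNested.prec_le [Std.Refl E] (h : PartiallyNested D E) : prec D E ≤ E :=
  fun j i hji => h j i hji j (refl j)

theorem PartiallyNested.prec_eq [Std.Refl D] [Std.Refl E] (h : PartiallyNested D E) :
    prec D E = E :=
  le_antisymm h.prec_le le_prec

theorem PartiallyNested.transGen_prec_eq [Std.Refl D] [Std.Refl E] (h : PartiallyNested D E) :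
    Relation.TransGen (prec D E) = E := by
  have := h.isTrans
  rw [h.prec_eq, Relation.transGen_eq_self]

theorem partiallyNested_of_transGen_prec_eq (h : Relation.TransGen (prec D E) = E) :
    PartiallyNested D E := by
  intro j i hji k hkj
  have chain : Relation.TransGen (prec D E) k j := h.ge k j hkj
  exact h.le k i (chain.tail hji)

end

theorem stmt_0_general {V : Type*} (D E : V → V → Prop) [Std.Refl D] [Std.Refl E] :
    PartiallyNested D E ↔ ∀ i j, E i j ↔ Relation.TransGen (prec D E) i j := by
  constructor
  · intro h i j
    rw [h.transGen_prec_eq]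
  · intro h
    exact partiallyNested_of_transGen_prec_eq (funext₂ fun i j => propext (h i j).symm)

/-- Lemma 2: `E` is partially nested if and only if `E` equals the transitive
closure of its own precedence relation. -/
theorem stmt_0 {V : Type*} [Fintype V] (D E : V → V → Prop)
    (hD : Reflexive D) (hE : Reflexive E) :
    PartiallyNested D E ↔ ∀ i j, E i j ↔ Relation.TransGen (prec D E) i j :=
  @stmt_0_general V D E ⟨hD⟩ ⟨hE⟩
end

section
/- Let E be a reflexive, partially nested relation on a finite type V (with coupling relation D). Then the transitive closure of the precedence relation of E is contained in E: for all j i, Relation.TransGen (prec E) j i → E j i. (The 'only if' direction of Lemma 2: a chain of precedences j = v₁ ≺ v₂ ≺ … ≺ v_m = i yields nested information sets, which together with the self-loops of Assumption 3 forces the edge (j,i) ∈ E.) -/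
theorem PartiallyNested.inNeighbors_subset_of_reflTransGen_prec {V : Type*} {D E : V → V → Prop}
    {j i : V} (hPN : PartiallyNested D E) (hji : Relation.ReflTransGen (prec D E) j i) :
    {k | E k j} ⊆ {k | E k i} := by
  induction hji with
  | refl => exact subset_rfl
  | tail _ hprec ih => exact ih.trans (hPN _ _ hprec)

theorem stmt_1_general {V : Type*} (D E : V → V → Prop) [Std.Refl E]
    (hPN : PartiallyNested D E) : ∀ j i, Relation.TransGen (prec D E) j i → E j i :=
  fun j _ hji => hPN.inNeighbors_subset_of_reflTransGen_prec hji.to_reflTransGen (refl_of E j)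

/-- The 'only if' direction of Lemma 2: if `E` is reflexive and partially
nested, then the transitive closure of its precedence relation is contained
in `E`. -/
theorem stmt_1 {V : Type*} [Fintype V] (D E : V → V → Prop)
    (hE : Reflexive E) (hPN : PartiallyNested D E) :
    ∀ j i, Relation.TransGen (prec D E) j i → E j i := by
  have : Std.Refl E := ⟨hE⟩
  exact stmt_1_general D E hPN
end

section
/- Let D be a reflexive coupling relation on a finite type V, let E be a reflexive information graph, and let G be a partially nested relation containing E (∀ j i, E j i → G j i). Then G contains the transitive closure of the precedence relation of E: for all j i, Relation.TransGen (prec E) j i → G j i. (Corollary 1: any partially nested supergraph of E must contain the transitive closure of the precedence graph of E.) -/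
section

variable {V : Type*} {D E G : V → V → Prop} {i j : V}

theorem prec_mono (hEG : E ≤ G) : prec D E ≤ prec D G :=
  fun _ i ⟨k, hki, hjk⟩ => ⟨k, hEG k i hki, hjk⟩

theorem PartiallyNested.isTrans_prec (hG : PartiallyNested D G) : IsTrans V (prec D G) where
  trans := fun _ j i ⟨k, hkj, hlk⟩ hji => ⟨k, hG j i hji k hkj, hlk⟩

theorem PartiallyNested.rel_of_prec (hG : PartiallyNested D G) (hj : G j j)
    (hji : prec D G j i) : G j i :=
  hG j i hji j hj

end

theorem stmt_5_general {V : Type*} (D E G : V → V → Prop) (hrefl : ∀ i, G i i)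
    (hG : PartiallyNested D G) (hEG : ∀ j i, E j i → G j i) :
    ∀ j i, Relation.TransGen (prec D E) j i → G j i := by
  intro j i hji
  have : IsTrans V (prec D G) := hG.isTrans_prec
  have hprec : prec D G j i := Relation.transGen_minimal (prec_mono hEG) j i hji
  exact hG.rel_of_prec (hrefl j) hprec

/-- Corollary 1: any partially nested supergraph `G` of the information graph
`E` must contain the transitive closure of the precedence graph of `E`. -/
theorem stmt_5 {V : Type*} [Fintype V] (D E G : V → V → Prop)
    (hD : Reflexive D) (hE : Reflexive E)
    (hG : PartiallyNested D G) (hEG : ∀ j i, E j i → G j i) :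
    ∀ j i, Relation.TransGen (prec D E) j i → G j i :=
  stmt_5_general D E G (fun i => hEG i i (hE i)) hG hEG
end

section
/- Let n : ℕ and let f : (Fin n → ℝ) → (Fin n → ℝ) be strictly causal in the sense that for all x y : Fin n → ℝ and all i : Fin n, if x j = y j for every j < i then f x i = f y i. Then the map x ↦ x - f x is a bijection of Fin n → ℝ onto itself. (This is the invertibility claim underlying the nonlinear Youla parameterization: the map I − CBγ is invertible because the decentralized control policy γ is causal and the matrix CB is strictly block lower triangular, so the composition y ↦ CB γ(y) is strictly causal.) -/
/-!
For fixed `z`, the equation `x - f x = z` says that `x` is a fixed point of `x ↦ z + f x`, which is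
again strictly causal. A strictly causal self-map has exactly one fixed point, because the equation
`x i = f x i` determines `x i` from the earlier components: this is well-founded recursion for
existence and well-founded induction for uniqueness.
-/

open Function Set

/-- A map between dependent products over an ordered index type is strictly causal if the `i`-th
component of its value depends only on the components of its argument with index `< i`. -/
def StrictlyCausal {ι : Type*} [Preorder ι] {α β : ι → Type*} (f : (∀ i, α i) → ∀ i, β i) : Prop :=
  ∀ i, DependsOn (fun x => f x i) (Iio i)

namespace StrictlyCausal

variable {ι : Type*} [Preorder ι] {α β : ι → Type*}

theorem const_add [∀ i, Add (β i)] {f : (∀ i, α i) → ∀ i, β i} (hf : StrictlyCausal f)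
    (z : ∀ i, β i) : StrictlyCausal (fun x => z + f x) :=
  fun i _ _ hxy => congrArg (z i + ·) (hf i hxy)

variable [WellFoundedLT ι] {f : (∀ i, α i) → ∀ i, α i}

theorem eq_of_isFixedPt (hf : StrictlyCausal f) {x y : ∀ i, α i} (hx : IsFixedPt f x)
    (hy : IsFixedPt f y) : x = y := by
  funext i
  induction i using WellFoundedLT.induction with
  | ind i ih =>
    calc
      x i = f x i := (congrFun hx i).symm
      _ = f y i := hf i ih
      _ = y i := congrFun hy i

theorem exists_isFixedPt [∀ i, Nonempty (α i)] (hf : StrictlyCausal f) : ∃ x, IsFixedPt f x := by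
  choose step f_eq_step using fun i => dependsOn_iff_exists_comp.mp (hf i)
  let recStep (i : ι) (prev : ∀ j, j < i → α j) : α i := step i fun j => prev j j.2
  let x : ∀ i, α i := wellFounded_lt.fix recStep
  refine ⟨x, funext fun i => ?_⟩
  calc
    f x i = step i ((Iio i).domRestrict x) := congrFun (f_eq_step i) x
    _ = x i := (wellFounded_lt.fix_eq recStep i).symm

theorem existsUnique_isFixedPt [∀ i, Nonempty (α i)] (hf : StrictlyCausal f) :
    ∃! x, IsFixedPt f x :=
  existsUnique_of_exists_of_unique hf.exists_isFixedPt fun _ _ => hf.eq_of_isFixedPt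

end StrictlyCausal

theorem stmt_12_general {ι : Type*} [Preorder ι] [WellFoundedLT ι] {G : ι → Type*}
    [∀ i, AddGroup (G i)] {f : (∀ i, G i) → ∀ i, G i} (hf : StrictlyCausal f) :
    Bijective (fun x => x - f x) := by
  refine (bijective_iff_existsUnique _).mpr fun z => ?_
  have sub_eq_iff_isFixedPt (x : ∀ i, G i) : x - f x = z ↔ IsFixedPt (fun x => z + f x) x :=
    sub_eq_iff_eq_add.trans eq_comm
  simpa only [sub_eq_iff_isFixedPt] using (hf.const_add z).existsUnique_isFixedPt

/-- Invertibility underlying the nonlinear Youla parameterization: if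
`f : (Fin n → ℝ) → (Fin n → ℝ)` is strictly causal (the `i`-th component of
`f x` depends only on the components `x j` with `j < i`), then the map
`x ↦ x - f x` is a bijection. -/
theorem stmt_12 {n : ℕ} (f : (Fin n → ℝ) → (Fin n → ℝ))
    (hf : ∀ x y : Fin n → ℝ, ∀ i : Fin n, (∀ j, j < i → x j = y j) → f x i = f y i) :
    Function.Bijective (fun x : Fin n → ℝ => x - f x) :=
  stmt_12_general fun i x y => hf x y i
end
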